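/- Define the integer sequence a : ℕ → ℤ by the initial values (a(0), a(1), …, a(15)) = (−83, 35, −19, 1, −5, 1, −1, 0, 1, 1, 5, 1, 19, 35, 83, 73) and the recurrence a(n+16) − a(n+15) − 2a(n+13) − 16a(n+12) + 10a(n+11) − 2a(n+10) + 16a(n+9) + 50a(n+8) − 16a(n+7) − 2a(n+6) − 10a(n+5) − 16a(n+4) + 2a(n+3) + a(n+1) + a(n) = 0 for all n ≥ 0. Then for every integer n ≥ 9, τ(GP(n,4)) = n · a(n+7)². -/

import Mathlib

open Polynomial

/-- The defining relation for the generalized Petersen graph `GP(n,k)`: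
`u_i ~ u_{i+1}`, `u_i ~ v_i`, `v_i ~ v_{i+k}` (indices mod `n`);
`Sum.inl i` is the outer vertex `u_i`, `Sum.inr i` the inner vertex `v_i`. -/
def gpRel (n k : ℕ) : (ZMod n ⊕ ZMod n) → (ZMod n ⊕ ZMod n) → Prop
  | Sum.inl i, Sum.inl j => j = i + 1
  | Sum.inl i, Sum.inr j => j = i
  | Sum.inr _, Sum.inl _ => False
  | Sum.inr i, Sum.inr j => j = i + (k : ZMod n)

instance (n k : ℕ) : DecidableRel (gpRel n k) := fun a b =>
  match a, b with
  | Sum.inl i, Sum.inl j => inferInstanceAs (Decidable (j = i + 1))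
  | Sum.inl i, Sum.inr j => inferInstanceAs (Decidable (j = i))
  | Sum.inr _, Sum.inl _ => inferInstanceAs (Decidable False)
  | Sum.inr i, Sum.inr j => inferInstanceAs (Decidable (j = i + (k : ZMod n)))

/-- The generalized Petersen graph `GP(n,k)`. -/
def genPetersen (n k : ℕ) : SimpleGraph (ZMod n ⊕ ZMod n) :=
  SimpleGraph.fromRel (gpRel n k)

instance (n k : ℕ) : DecidableRel (genPetersen n k).Adj := fun a b =>
  inferInstanceAs (Decidable (a ≠ b ∧ (gpRel n k a b ∨ gpRel n k b a)))

/-- The number of spanning trees of a graph `G`: the number of subgraphs that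
contain all vertices and are trees. -/
noncomputable def numSpanningTrees {V : Type*} (G : SimpleGraph V) : ℕ :=
  Nat.card {H : G.Subgraph // H.IsSpanning ∧ H.coe.IsTree}

/-!
By the matrix-tree theorem in Temperley's form, `(2n)² τ(GP(n,4)) = det (L + J)`, where `J` is the
all-ones matrix. The rotation of order `n` makes `L + J` a 2 × 2 block matrix with circulant blocks,
so the discrete Fourier transform turns the determinant into a product over the `n`-th roots of
unity `ζ`. For `ζ ≠ 1` the factor is `(x - 4) q(x)` with `x = 2 + ζ + ζ⁻¹` and `q` a fixed quartic.
Writing the roots of `q` as `yᵢ² = (sᵢ + sᵢ⁻¹)²`, the product over `ζ` of each `yᵢ² - x` is the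
square of the Chebyshev value `S_{n-1}(yᵢ)`, and the factor `4 - x` gives `n²`. Hence `τ(GP(n,4))`
is `n` times the square of `(-P)^(n-1) ∏ᵢ S_{n-1}(yᵢ)`, where `P = ∏ᵢ yᵢ` satisfies `P² = -1`.

Since `S_{n-1}(sᵢ + sᵢ⁻¹) = (sᵢⁿ - sᵢ⁻ⁿ) / (sᵢ - sᵢ⁻¹)`, this expression is a combination of the 16
geometric sequences with ratios `-P ∏ᵢ sᵢ^(±1)`. These ratios are roots of the characteristic
polynomial of the recurrence, which is palindromic up to sign and thus an octic in `x - x⁻¹`. It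
remains to compare 16 consecutive values.
-/

section MatrixTree

variable {V : Type*} {r : V} {f g : V → V}

/-- `f` is the parent map of a tree on `V` rooted at `r`: it sends a vertex to the next vertex on
its path to `r`, and fixes `r` itself. -/
structure IsParentMap (r : V) (f : V → V) : Prop where
  map_root : f r = r
  exists_iterate_eq : ∀ v, ∃ k, f^[k] v = r

/-- The graph joining each vertex `v` to `f v`; fixed points of `f` give no edge. -/
def parentGraph (f : V → V) : SimpleGraph V :=
  SimpleGraph.fromRel fun v w => f v = w

lemma parentGraph_adj {v w : V} : (parentGraph f).Adj v w ↔ v ≠ w ∧ (f v = w ∨ f w = v) :=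
  SimpleGraph.fromRel_adj _ _ _

lemma parentGraph_le_iff {G : SimpleGraph V} :
    parentGraph f ≤ G ↔ ∀ v, f v ≠ v → G.Adj v (f v) := by
  refine ⟨fun h v hv => h (parentGraph_adj.2 ⟨hv.symm, .inl rfl⟩), fun h v w hvw => ?_⟩
  obtain ⟨hne, rfl | rfl⟩ := parentGraph_adj.1 hvw
  · exact h v hne.symm
  · exact (h w hne).symm

namespace IsParentMap

lemma eq_root_of_isPeriodicPt (hf : IsParentMap r f) {v : V} {m : ℕ} (hm : 0 < m)
    (hv : f.IsPeriodicPt m v) : v = r := by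
  obtain ⟨k, hk⟩ := hf.exists_iterate_eq v
  have hroot : f^[m * k] v = r := by
    rw [← Nat.sub_add_cancel (Nat.le_mul_of_pos_left k hm), Function.iterate_add_apply, hk,
      Function.iterate_fixed hf.map_root]
  exact (hv.mul_const k).symm.trans hroot

lemma map_eq_self_iff (hf : IsParentMap r f) {v : V} : f v = v ↔ v = r :=
  ⟨fun hv => hf.eq_root_of_isPeriodicPt one_pos hv, by rintro rfl; exact hf.map_root⟩

lemma parentGraph_connected (hf : IsParentMap r f) : (parentGraph f).Connected := by
  have reachable_map (v : V) : (parentGraph f).Reachable v (f v) := by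
    by_cases hv : f v = v
    · rw [hv]
    · exact (parentGraph_le_iff.1 le_rfl v hv).reachable
  have reachable_iterate (v : V) (k : ℕ) : (parentGraph f).Reachable v (f^[k] v) := by
    induction k with
    | zero => rfl
    | succ k ih => exact Function.iterate_succ_apply' f k v ▸ ih.trans (reachable_map _)
  refine (SimpleGraph.connected_iff_exists_forall_reachable _).2 ⟨r, fun v => ?_⟩
  obtain ⟨k, hk⟩ := hf.exists_iterate_eq v
  exact hk ▸ (reachable_iterate v k).symm

lemma parentGraph_isTree [Finite V] (hf : IsParentMap r f) : (parentGraph f).IsTree := by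
  have hedges : (parentGraph f).edgeSet ⊆ (fun v => s(v, f v)) '' {r}ᶜ := by
    rintro ⟨v, w⟩ hvw
    obtain ⟨hne, rfl | rfl⟩ := parentGraph_adj.1 (show (parentGraph f).Adj v w from hvw)
    · exact ⟨v, fun hv => hne (hf.map_eq_self_iff.2 hv).symm, rfl⟩
    · exact ⟨w, fun hw => hne (hf.map_eq_self_iff.2 hw), Sym2.eq_swap⟩
  have hcard : (parentGraph f).edgeSet.ncard ≤ Nat.card V - 1 :=
    calc (parentGraph f).edgeSet.ncard
      _ ≤ ((fun v => s(v, f v)) '' {r}ᶜ).ncard := Set.ncard_le_ncard hedges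
      _ ≤ ({r}ᶜ : Set V).ncard := Set.ncard_image_le
      _ = Nat.card V - 1 := by rw [Set.ncard_compl, Set.ncard_singleton]
  have hpos : 0 < Nat.card V := Nat.card_pos_iff.2 ⟨⟨r⟩, ‹_›⟩
  refine SimpleGraph.isTree_iff_connected_and_card.2 ⟨hf.parentGraph_connected,
    le_antisymm ?_ hf.parentGraph_connected.card_vert_le_card_edgeSet_add_one⟩
  rw [Nat.card_coe_set_eq]
  lia

lemma eq_of_parentGraph_eq (hf : IsParentMap r f) (hg : IsParentMap r g)
    (hfg : parentGraph f = parentGraph g) : f = g := by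
  have agree (k : ℕ) : ∀ v, f^[k] v = r → f v = g v := by
    induction k with
    | zero => rintro v rfl; exact hf.map_root.trans hg.map_root.symm
    | succ k ih =>
      intro v hk
      by_cases hv : f v = v
      · rw [hv, hf.map_eq_self_iff.1 hv, hg.map_root]
      have hadj : (parentGraph g).Adj v (f v) := hfg ▸ parentGraph_le_iff.1 le_rfl v hv
      obtain ⟨-, hgv | hgv⟩ := parentGraph_adj.1 hadj
      · exact hgv.symm
      · -- Otherwise `f` and `g` orient the edge `{v, f v}` oppositely, and `v` lies on a 2-cycle.
        have hcycle : f.IsPeriodicPt 2 v := (ih (f v) hk).trans hgv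
        exact absurd (hf.map_eq_self_iff.2 (hf.eq_root_of_isPeriodicPt two_pos hcycle)) hv
  funext v
  obtain ⟨k, hk⟩ := hf.exists_iterate_eq v
  exact agree k v hk

end IsParentMap

lemma exists_adj_dist_lt {G : SimpleGraph V} (hG : G.Connected) {v w : V} (hvw : v ≠ w) :
    ∃ u, G.Adj v u ∧ G.dist u w < G.dist v w := by
  obtain ⟨p, hp⟩ := hG.exists_walk_length_eq_dist v w
  cases p with
  | nil => exact absurd rfl hvw
  | cons hadj q =>
    refine ⟨_, hadj, ?_⟩
    rw [← hp, SimpleGraph.Walk.length_cons]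
    exact Nat.lt_succ_of_le (SimpleGraph.dist_le q)

lemma exists_isParentMap_parentGraph_le {G : SimpleGraph V} (hG : G.Connected) (r : V) :
    ∃ f, IsParentMap r f ∧ parentGraph f ≤ G := by
  classical
  choose! next hadj hdist using fun v (hv : v ≠ r) => exists_adj_dist_lt hG hv
  refine ⟨Function.update next r r, ⟨Function.update_self .., fun v => ?_⟩,
    parentGraph_le_iff.2 fun v hv => ?_⟩
  · induction hd : G.dist v r using Nat.strong_induction_on generalizing v with
    | _ d ih =>
      by_cases hv : v = r
      · exact ⟨0, hv⟩
      obtain ⟨k, hk⟩ := ih _ (hd ▸ hdist v hv) (next v) rfl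
      exact ⟨k + 1, by rwa [Function.iterate_succ_apply, Function.update_of_ne hv]⟩
  · have hvr : v ≠ r := by rintro rfl; exact hv (Function.update_self ..)
    rw [Function.update_of_ne hvr]
    exact hadj v hvr

theorem numSpanningTrees_eq_card_isTree (G : SimpleGraph V) :
    numSpanningTrees G = Nat.card {T : SimpleGraph V // T ≤ G ∧ T.IsTree} :=
  Nat.card_congr
    { toFun := fun H => ⟨H.1.spanningCoe, H.1.spanningCoe_le,
        (H.1.spanningCoeEquivCoeOfSpanning H.2.1).isTree_iff.2 H.2.2⟩
      invFun := fun T => ⟨SimpleGraph.toSubgraph T.1 T.2.1,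
        SimpleGraph.toSubgraph.isSpanning T.1 T.2.1,
        ((SimpleGraph.toSubgraph T.1 T.2.1).spanningCoeEquivCoeOfSpanning
          (SimpleGraph.toSubgraph.isSpanning T.1 T.2.1)).isTree_iff.1 T.2.2⟩
      left_inv := fun ⟨_, hspan, _⟩ =>
        Subtype.ext (SimpleGraph.Subgraph.ext (Set.eq_univ_of_forall hspan).symm rfl)
      right_inv := fun _ => rfl }

theorem numSpanningTrees_eq_card_isParentMap [Finite V] (G : SimpleGraph V) (r : V) :
    numSpanningTrees G = Nat.card {f : V → V // IsParentMap r f ∧ parentGraph f ≤ G} := by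
  rw [numSpanningTrees_eq_card_isTree]
  refine (Nat.card_congr (Equiv.ofBijective
    (fun f => ⟨parentGraph f.1, f.2.2, f.2.1.parentGraph_isTree⟩) ⟨?_, ?_⟩)).symm
  · intro ⟨f, hf, _⟩ ⟨g, hg, _⟩ hfg
    exact Subtype.ext (hf.eq_of_parentGraph_eq hg (congrArg Subtype.val hfg))
  · rintro ⟨T, hTG, hT⟩
    obtain ⟨f, hf, hfT⟩ := exists_isParentMap_parentGraph_le hT.connected r
    have hminimal := SimpleGraph.isTree_iff_minimal_connected.1 hT
    have heq : parentGraph f = T := hminimal.eq_of_le hf.parentGraph_connected hfT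
    exact ⟨⟨f, hf, hfT.trans hTG⟩, Subtype.ext heq⟩

variable {R : Type*} [CommRing R] [DecidableEq V]

/-- The matrix `1 - A`, where `A` is the adjacency matrix of the directed graph with an arc
`v → f v` for every `v`, except that the row at `r` is the basis vector `e_r`. -/
def parentMatrix (R : Type*) [CommRing R] (r : V) (f : V → V) : Matrix V V R :=
  fun v => if v = r then Pi.single r 1 else Pi.single v 1 - Pi.single (f v) 1

lemma parentMatrix_root : parentMatrix R r f r = Pi.single r 1 := if_pos rfl

lemma parentMatrix_of_ne {v : V} (hv : v ≠ r) :
    parentMatrix R r f v = Pi.single v 1 - Pi.single (f v) 1 := if_neg hv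

variable [Fintype V]

-- The matrix is unitriangular once the vertices are ordered by their distance to the root.
lemma IsParentMap.det_parentMatrix (hf : IsParentMap r f) : (parentMatrix R r f).det = 1 := by
  classical
  let depth (v : V) : ℕ := Nat.find (hf.exists_iterate_eq v)
  have depth_lt {v : V} (hv : v ≠ r) : depth (f v) < depth v := by
    have hspec : f^[depth v] v = r := Nat.find_spec (hf.exists_iterate_eq v)
    obtain ⟨k, hk⟩ : ∃ k, depth v = k + 1 :=
      Nat.exists_eq_succ_of_ne_zero fun h => hv (by simpa [h] using hspec)
    rw [hk, Function.iterate_succ_apply] at hspec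
    exact hk ▸ Nat.lt_succ_of_le (Nat.find_min' _ hspec)
  have apply_of_le {v w : V} (hvw : depth v ≤ depth w) :
      parentMatrix R r f v w = (1 : Matrix V V R) v w := by
    by_cases hv : v = r
    · rw [hv, parentMatrix_root, Matrix.one_eq_pi_single]
    · have hw : w ≠ f v := by rintro rfl; exact (depth_lt hv).not_ge hvw
      rw [parentMatrix_of_ne hv, Matrix.one_eq_pi_single, Pi.sub_apply, Pi.single_eq_of_ne hw,
        sub_zero]
  have htriangular : (parentMatrix R r f).BlockTriangular (OrderDual.toDual ∘ depth) := by
    intro v w (hvw : depth v < depth w)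
    rw [apply_of_le hvw.le, Matrix.one_apply_ne (by rintro rfl; exact hvw.ne rfl)]
  rw [htriangular.det]
  refine Finset.prod_eq_one fun d _ => ?_
  have hblock : (parentMatrix R r f).toSquareBlock (OrderDual.toDual ∘ depth) d = 1 := by
    ext ⟨v, hv⟩ ⟨w, hw⟩
    rw [Matrix.toSquareBlock_def, Matrix.of_apply, apply_of_le (OrderDual.toDual.injective
      (hv.trans hw.symm)).le]
    simp only [Matrix.one_apply, Subtype.mk.injEq]
  rw [hblock, Matrix.det_one]

lemma det_eq_zero_of_mulVec_eq_zero {M : Matrix V V R} {x : V → R} (hx : M.mulVec x = 0) {v : V}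
    (hv : x v = 1) : M.det = 0 := by
  have h := congrFun (congrArg M.adjugate.mulVec hx) v
  simpa [Matrix.mulVec_mulVec, Matrix.adjugate_mul, Matrix.smul_mulVec, hv] using h

-- The indicator of the vertices that never reach `r` is in the kernel.
lemma det_parentMatrix_eq_zero {v : V} (hv : ∀ k, f^[k] v ≠ r) : (parentMatrix R r f).det = 0 := by
  classical
  let x (w : V) : R := if ∀ k, f^[k] w ≠ r then 1 else 0
  have hroot : x r = 0 := if_neg fun h => h 0 rfl
  have hparent {w : V} (hw : w ≠ r) : x w = x (f w) := by
    refine if_congr ⟨fun h k => h (k + 1), ?_⟩ rfl rfl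
    rintro h (_ | k)
    exacts [hw, h k]
  refine det_eq_zero_of_mulVec_eq_zero (x := x) (funext fun w => ?_) (if_pos hv)
  by_cases hw : w = r
  · rw [Matrix.mulVec, hw, parentMatrix_root, single_one_dotProduct, hroot, Pi.zero_apply]
  · rw [Matrix.mulVec, parentMatrix_of_ne hw, sub_dotProduct, single_one_dotProduct,
      single_one_dotProduct, hparent hw, sub_self, Pi.zero_apply]

variable (G : SimpleGraph V) [DecidableRel G.Adj]

lemma det_updateRow_lapMatrix_eq_sum (r : V) :
    ((G.lapMatrix R).updateRow r (Pi.single r 1)).det =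
      ∑ f ∈ Fintype.piFinset (Function.update (fun v => G.neighborFinset v) r {r}),
        (parentMatrix R r f).det := by
  let row (v w : V) : V → R := if v = r then Pi.single r 1 else Pi.single v 1 - Pi.single w 1
  have hrows : (G.lapMatrix R).updateRow r (Pi.single r 1) =
      fun v => ∑ w ∈ Function.update (fun v => G.neighborFinset v) r {r} v, row v w := by
    ext v w
    by_cases hv : v = r
    · subst hv; simp [row]
    · simp [row, hv, SimpleGraph.lapMatrix, SimpleGraph.degMatrix, Matrix.diagonal_apply,
        Finset.sum_apply, Pi.single_apply, eq_comm (a := w)]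
  rw [hrows]
  exact Matrix.detRowAlternating.toMultilinearMap.map_sum_finset row _

/-- The **matrix-tree theorem**. -/
theorem det_updateRow_lapMatrix (r : V) :
    ((G.lapMatrix R).updateRow r (Pi.single r 1)).det = numSpanningTrees G := by
  classical
  have mem_piFinset {f : V → V} :
      f ∈ Fintype.piFinset (Function.update (fun v => G.neighborFinset v) r {r}) ↔
        f r = r ∧ ∀ v ≠ r, G.Adj v (f v) := by
    simp only [Fintype.mem_piFinset, Function.forall_update_iff _ fun v s => f v ∈ s,
      Finset.mem_singleton, SimpleGraph.mem_neighborFinset]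
  have det_eq (f : V → V) (hf : f r = r) :
      (parentMatrix R r f).det = if IsParentMap r f then 1 else 0 := by
    split_ifs with h
    · exact h.det_parentMatrix
    · have hv : ∃ v, ∀ k, f^[k] v ≠ r := by
        by_contra! hv
        exact h ⟨hf, hv⟩
      exact det_parentMatrix_eq_zero hv.choose_spec
  rw [det_updateRow_lapMatrix_eq_sum,
    Finset.sum_congr rfl fun f hf => det_eq f (mem_piFinset.1 hf).1, Finset.sum_boole,
    numSpanningTrees_eq_card_isParentMap G r, Nat.card_eq_fintype_card, Fintype.card_subtype]
  congr 2
  ext f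
  simp only [Finset.mem_filter, Finset.mem_univ, true_and, mem_piFinset, parentGraph_le_iff]
  constructor
  · rintro ⟨⟨-, hadj⟩, hf⟩
    exact ⟨hf, fun v hv => hadj v (mt hf.map_eq_self_iff.2 hv)⟩
  · rintro ⟨hf, hadj⟩
    exact ⟨⟨hf.map_root, fun v hv => hadj v (mt hf.map_eq_self_iff.1 hv)⟩, hf⟩

lemma det_updateRow_of_sum_row_eq_zero {M : Matrix V V R} (hrow : ∀ i, ∑ j, M i j = 0) (r : V)
    (x : V → R) :
    (M.updateRow r x).det = (∑ i, x i) * (M.updateRow r (Pi.single r 1)).det := by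
  have hmul : (M.updateRow r x).mulVec 1 = Pi.single r (∑ i, x i) := by
    ext i
    rw [Matrix.mulVec, dotProduct_one]
    by_cases hi : i = r
    · subst hi; rw [Matrix.updateRow_self, Pi.single_eq_same]
    · rw [Matrix.updateRow_ne hi, hrow, Pi.single_eq_of_ne hi]
  have h := congrFun (congrArg (M.updateRow r x).adjugate.mulVec hmul) r
  simpa [Matrix.mulVec_mulVec, Matrix.adjugate_mul, Matrix.smul_mulVec, Matrix.adjugate_apply,
    mul_comm] using h

lemma det_add_vecMulVec_of_sum_eq_zero {M : Matrix V V R} (hrow : ∀ i, ∑ j, M i j = 0)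
    (hcol : ∀ j, ∑ i, M i j = 0) (x y : V → R) (r : V) :
    (M + Matrix.vecMulVec x y).det =
      (∑ i, x i) * (∑ i, y i) * (M.updateRow r (Pi.single r 1)).det := by
  have sum_rows : ∑ i, (1 : R) • (M + Matrix.vecMulVec x y) i = (∑ i, x i) • y := by
    ext j
    rw [Finset.sum_apply]
    simp [Matrix.vecMulVec_apply, Finset.sum_add_distrib, hcol, Finset.sum_mul]
  calc (M + Matrix.vecMulVec x y).det
    _ = ((M + Matrix.vecMulVec x y).updateRow r ((∑ i, x i) • y)).det := by
        rw [← sum_rows, Matrix.det_updateRow_sum, one_smul]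
    _ = (∑ i, x i) * ((M + Matrix.vecMulVec x y).updateRow r y).det :=
        Matrix.det_updateRow_smul ..
    _ = (∑ i, x i) * (M.updateRow r y).det := by
        congr 1
        refine Matrix.det_eq_of_forall_row_eq_smul_add_const (Function.update x r 0) r (by simp)
          fun i j => ?_
        by_cases hi : i = r
        · subst hi; simp
        · simp [hi, Matrix.updateRow_ne, Matrix.vecMulVec_apply]
    _ = (∑ i, x i) * (∑ i, y i) * (M.updateRow r (Pi.single r 1)).det := by
        rw [det_updateRow_of_sum_row_eq_zero hrow, mul_assoc]

/-- **Temperley's formula**. -/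
theorem det_lapMatrix_add_one [Nonempty V] :
    (G.lapMatrix R + Matrix.of fun _ _ => 1).det =
      (Fintype.card V : R) ^ 2 * numSpanningTrees G := by
  have hrow (i : V) : ∑ j, G.lapMatrix R i j = 0 := by
    simpa [Matrix.mulVec, dotProduct] using
      congrFun (SimpleGraph.lapMatrix_mulVec_const_eq_zero (R := R) G) i
  have hcol (j : V) : ∑ i, G.lapMatrix R i j = 0 := by
    simpa only [(G.isSymm_lapMatrix (R := R)).apply] using hrow j
  have hone : (Matrix.of fun _ _ => 1 : Matrix V V R) = Matrix.vecMulVec 1 1 := by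
    ext; simp [Matrix.vecMulVec_apply]
  rw [hone, det_add_vecMulVec_of_sum_eq_zero hrow hcol 1 1 (Classical.arbitrary V),
    det_updateRow_lapMatrix]
  simp [sq]

end MatrixTree

section Circulant

lemma det_fromBlocks_diagonal {ι R : Type*} [Fintype ι] [DecidableEq ι] [CommRing R]
    (a b c d : ι → R) :
    (Matrix.fromBlocks (.diagonal a) (.diagonal b) (.diagonal c) (.diagonal d)).det =
      ∏ i, (a i * d i - b i * c i) := by
  let e : Fin 2 × ι ≃ ι ⊕ ι := (finTwoEquiv.prodCongr (.refl ι)).trans (Equiv.boolProdEquivSum ι)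
  have hblocks :
      (Matrix.fromBlocks (.diagonal a) (.diagonal b) (.diagonal c) (.diagonal d)).submatrix e e =
        Matrix.blockDiagonal fun i => !![a i, b i; c i, d i] := by
    ext ⟨p, i⟩ ⟨q, j⟩
    fin_cases p <;> fin_cases q <;>
      simp [e, Matrix.blockDiagonal_apply, Matrix.diagonal_apply, Equiv.boolProdEquivSum,
        finTwoEquiv]
  rw [← Matrix.det_submatrix_equiv_self e, hblocks, Matrix.det_blockDiagonal]
  simp only [Matrix.det_fin_two_of]

open ZMod

variable {n : ℕ} [NeZero n]

lemma sum_stdAddChar_mul (k : ZMod n) : ∑ j, stdAddChar (j * k) = if k = 0 then (n : ℂ) else 0 := by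
  simpa using AddChar.sum_mulShift k (isPrimitive_stdAddChar n)

variable (n) in
/-- The character table of `ZMod n`. -/
noncomputable def fourierMatrix : Matrix (ZMod n) (ZMod n) ℂ :=
  .of fun j k => stdAddChar (j * k)

lemma det_fourierMatrix_ne_zero : (fourierMatrix n).det ≠ 0 := by
  have hinv : fourierMatrix n * .of (fun j k => stdAddChar (-(j * k))) = (n : ℂ) • 1 := by
    ext i k
    have hentry (j : ZMod n) : stdAddChar (i * j) * stdAddChar (-(j * k)) =
        (stdAddChar (j * (i - k)) : ℂ) := by
      rw [← AddChar.map_add_eq_mul]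
      ring_nf
    simp only [Matrix.mul_apply, fourierMatrix, Matrix.of_apply, hentry, sum_stdAddChar_mul,
      sub_eq_zero, Matrix.smul_apply, Matrix.one_apply, smul_eq_mul, mul_ite, mul_one, mul_zero]
  refine left_ne_zero_of_mul (b := Matrix.det (.of fun j k : ZMod n => stdAddChar (-(j * k)))) ?_
  rw [← Matrix.det_mul, hinv, Matrix.det_smul, Matrix.det_one, mul_one]
  exact pow_ne_zero _ (NeZero.ne _)

lemma circulant_mul_fourierMatrix (v : ZMod n → ℂ) :
    Matrix.circulant v * fourierMatrix n = fourierMatrix n * .diagonal (dft v) := by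
  ext i k
  rw [Matrix.mul_diagonal]
  simp only [Matrix.mul_apply, Matrix.circulant_apply, fourierMatrix, Matrix.of_apply, dft_apply,
    Finset.mul_sum, smul_eq_mul]
  refine Fintype.sum_equiv (Equiv.subLeft i) _ _ fun j => ?_
  rw [Equiv.subLeft_apply, ← mul_assoc, ← AddChar.map_add_eq_mul, mul_comm (v _)]
  ring_nf

theorem det_fromBlocks_circulant (a b c d : ZMod n → ℂ) :
    (Matrix.fromBlocks (.circulant a) (.circulant b) (.circulant c) (.circulant d)).det =
      ∏ k, (dft a k * dft d k - dft b k * dft c k) := by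
  have hdiag : Matrix.fromBlocks (.circulant a) (.circulant b) (.circulant c) (.circulant d) *
      .fromBlocks (fourierMatrix n) 0 0 (fourierMatrix n) =
      .fromBlocks (fourierMatrix n) 0 0 (fourierMatrix n) *
        .fromBlocks (.diagonal (dft a)) (.diagonal (dft b)) (.diagonal (dft c))
          (.diagonal (dft d)) := by
    simp only [Matrix.fromBlocks_multiply, circulant_mul_fourierMatrix, Matrix.mul_zero,
      Matrix.zero_mul, add_zero, zero_add]
  have hdet : (Matrix.fromBlocks (fourierMatrix n) 0 0 (fourierMatrix n)).det ≠ 0 := by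
    rw [Matrix.det_fromBlocks_zero₂₁]
    exact mul_ne_zero det_fourierMatrix_ne_zero det_fourierMatrix_ne_zero
  have h := congrArg Matrix.det hdiag
  rw [Matrix.det_mul, Matrix.det_mul, mul_comm] at h
  rw [mul_left_cancel₀ hdet h, det_fromBlocks_diagonal]

lemma dft_single (t : ZMod n) (z : ℂ) :
    dft (Pi.single t z) = fun k => stdAddChar (-(t * k)) * z := by
  ext k
  simp [dft_apply, Pi.single_apply]

lemma dft_const_one : dft (1 : ZMod n → ℂ) = Pi.single 0 (n : ℂ) := by
  ext k
  simpa [dft_apply, Pi.single_apply] using sum_stdAddChar_mul (-k)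

end Circulant

section GeneralizedPetersen

open ZMod

variable {n k : ℕ}

lemma natCast_zmod_ne_zero {m : ℕ} (hm : 0 < m) (hmn : m < n) : (m : ZMod n) ≠ 0 := by
  rw [Ne, natCast_eq_zero_iff]
  exact Nat.not_dvd_of_pos_of_lt hm hmn

lemma ite_adj_shift_eq_circulant {A R : Type*} [AddCommGroup A] [DecidableEq A] [NonAssocSemiring R]
    {t : A} (ht : t ≠ 0) (htt : t + t ≠ 0) (i j : A) :
    (if i ≠ j ∧ (j = i + t ∨ i = j + t) then (1 : R) else 0) =
      Matrix.circulant (Pi.single t 1 + Pi.single (-t) 1) i j := by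
  have hneg : t ≠ -t := fun h => htt (eq_neg_iff_add_eq_zero.1 h)
  have heq : i = j ↔ i - j = 0 := sub_eq_zero.symm
  have hforward : i = j + t ↔ i - j = t := by rw [sub_eq_iff_eq_add']
  have hbackward : j = i + t ↔ i - j = -t := by grind
  simp only [Matrix.circulant_apply, Pi.add_apply, Pi.single_apply, ne_eq, heq, hforward,
    hbackward]
  grind

lemma adjMatrix_genPetersen (R : Type*) [NonAssocSemiring R] (hk : 0 < k) (hkn : 2 * k < n) :
    (genPetersen n k).adjMatrix R =
      .fromBlocks (.circulant (Pi.single 1 1 + Pi.single (-1) 1)) 1 1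
        (.circulant (Pi.single (k : ZMod n) 1 + Pi.single (-(k : ZMod n)) 1)) := by
  have shift_ne_zero (t : ℕ) (ht : 0 < t) (htn : 2 * t < n) :
      (t : ZMod n) ≠ 0 ∧ (t + t : ZMod n) ≠ 0 :=
    ⟨natCast_zmod_ne_zero ht (by lia),
      by exact_mod_cast natCast_zmod_ne_zero (m := t + t) (by lia) (by lia)⟩
  obtain ⟨hone, htwo⟩ := shift_ne_zero 1 one_pos (by lia)
  rw [Nat.cast_one] at hone htwo
  obtain ⟨hk₁, hk₂⟩ := shift_ne_zero k hk hkn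
  ext (i | i) (j | j) <;> rw [SimpleGraph.adjMatrix_apply]
  · rw [Matrix.fromBlocks_apply₁₁, ← ite_adj_shift_eq_circulant hone htwo]
    simp [genPetersen, gpRel]
  · simp [genPetersen, gpRel, Matrix.one_apply, eq_comm]
  · simp [genPetersen, gpRel, Matrix.one_apply]
  · rw [Matrix.fromBlocks_apply₂₂, ← ite_adj_shift_eq_circulant hk₁ hk₂]
    simp [genPetersen, gpRel]

variable [NeZero n]

lemma natCast_degree_genPetersen (R : Type*) [NonAssocSemiring R] (hk : 0 < k) (hkn : 2 * k < n)
    (x : ZMod n ⊕ ZMod n) :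
    ((genPetersen n k).degree x : R) = 3 := by
  have h := SimpleGraph.adjMatrix_mulVec_const_apply (G := genPetersen n k) (a := (1 : R)) (v := x)
  rw [mul_one] at h
  have sum_circulant (v : ZMod n → R) (i : ZMod n) : ∑ j, v (i - j) = ∑ j, v j :=
    (Equiv.subLeft i).sum_comp v
  rw [← h, adjMatrix_genPetersen R hk hkn]
  rcases x with i | i <;>
    simp [Matrix.mulVec, dotProduct, Fintype.sum_sum_type, Matrix.one_apply, sum_circulant,
      Finset.sum_add_distrib] <;> norm_num

lemma lapMatrix_genPetersen_add_one (hk : 0 < k) (hkn : 2 * k < n) :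
    (genPetersen n k).lapMatrix ℂ + .of (fun _ _ => 1) =
      .fromBlocks
        (.circulant (1 + Pi.single 0 3 - (Pi.single 1 1 + Pi.single (-1) 1)))
        (.circulant (1 - Pi.single 0 1)) (.circulant (1 - Pi.single 0 1))
        (.circulant (1 + Pi.single 0 3 -
          (Pi.single (k : ZMod n) 1 + Pi.single (-(k : ZMod n)) 1))) := by
  have hdeg : (genPetersen n k).degMatrix ℂ = .diagonal fun _ => 3 :=
    congrArg _ (funext (natCast_degree_genPetersen ℂ hk hkn))
  rw [SimpleGraph.lapMatrix, hdeg, adjMatrix_genPetersen ℂ hk hkn]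
  ext (i | i) (j | j) <;>
    simp [Matrix.diagonal_apply, Matrix.one_apply, Pi.single_apply, sub_eq_zero] <;> ring

theorem mul_numSpanningTrees_genPetersen (hk : 0 < k) (hkn : 2 * k < n) :
    (n : ℂ) * numSpanningTrees (genPetersen n k) =
      ∏ j ∈ Finset.univ.erase (0 : ZMod n), ((3 - (stdAddChar (-j) + stdAddChar j)) *
        (3 - (stdAddChar (-((k : ZMod n) * j)) + stdAddChar ((k : ZMod n) * j))) - 1) := by
  have hn : (n : ℂ) ≠ 0 := NeZero.ne _
  have hdet := det_lapMatrix_add_one (R := ℂ) (genPetersen n k)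
  rw [lapMatrix_genPetersen_add_one hk hkn, det_fromBlocks_circulant,
    ← Finset.mul_prod_erase _ _ (Finset.mem_univ 0)] at hdet
  simp only [map_add, map_sub, dft_single, dft_const_one, Pi.add_apply, Pi.sub_apply, zero_mul,
    one_mul, neg_mul, neg_neg, mul_one, mul_zero, neg_zero, AddChar.map_zero_eq_one,
    Pi.single_eq_same, Fintype.card_sum, ZMod.card, Nat.cast_add] at hdet
  rw [Finset.prod_congr rfl fun j hj => by
    rw [Pi.single_eq_of_ne (Finset.ne_of_mem_erase hj), zero_add, zero_sub, neg_mul_neg,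
      mul_one]] at hdet
  refine mul_left_cancel₀ hn ?_
  linear_combination -hdet / 4

end GeneralizedPetersen

section Chebyshev

open Chebyshev

section SmallIndex

variable (R : Type*) [CommRing R]

lemma chebyshevS_three : S R 3 = X * (X ^ 2 - 2) := by
  have h : S R 3 = X * S R 2 - S R 1 := S_add_two R 1
  rw [h, S_two, S_one]
  ring

lemma chebyshevS_four : S R 4 = X ^ 4 - 3 * X ^ 2 + 1 := by
  have h : S R 4 = X * S R 3 - S R 2 := S_add_two R 2
  rw [h, chebyshevS_three, S_two]
  ring

lemma chebyshevS_five : S R 5 = X * ((X ^ 2 - 1) * (X ^ 2 - 3)) := by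
  have h : S R 5 = X * S R 4 - S R 3 := S_add_two R 3
  rw [h, chebyshevS_four, chebyshevS_three]
  ring

lemma chebyshevS_six : S R 6 = X ^ 6 - 5 * X ^ 4 + 6 * X ^ 2 - 1 := by
  have h : S R 6 = X * S R 5 - S R 4 := S_add_two R 4
  rw [h, chebyshevS_five, chebyshevS_four]
  ring

lemma chebyshevS_seven : S R 7 = X * ((X ^ 2 - 2) * (X ^ 4 - 4 * X ^ 2 + 2)) := by
  have h : S R 7 = X * S R 6 - S R 5 := S_add_two R 5
  rw [h, chebyshevS_six, chebyshevS_five]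
  ring

end SmallIndex

variable {K : Type*} [Field K] {s : K}

lemma eval_S_add_one_sub_mul_eval_S (hs : s ≠ 0) (n : ℤ) :
    (S K (n + 1)).eval (s + s⁻¹) - s * (S K n).eval (s + s⁻¹) = s⁻¹ ^ (n + 1) := by
  have hstep (m : ℤ) : (S K (m + 2)).eval (s + s⁻¹) - s * (S K (m + 1)).eval (s + s⁻¹) =
      s⁻¹ * ((S K (m + 1)).eval (s + s⁻¹) - s * (S K m).eval (s + s⁻¹)) := by
    rw [S_add_two, eval_sub, eval_mul, eval_X]
    field_simp
    ring
  have hs' : s⁻¹ ≠ 0 := inv_ne_zero hs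
  induction n using Int.induction_on with
  | zero => simp
  | succ m ih => rw [add_assoc, one_add_one_eq_two, hstep, ih, ← zpow_one_add₀ hs']; ring_nf
  | pred m ih =>
    have h := hstep (-m - 1)
    rw [show (-m - 1 + 2 : ℤ) = -m + 1 by ring, sub_add_cancel, ih, zpow_add_one₀ hs',
      mul_comm] at h
    rw [sub_add_cancel, mul_left_cancel₀ hs' h]

lemma sub_inv_mul_eval_S (hs : s ≠ 0) (n : ℤ) :
    (s - s⁻¹) * (S K n).eval (s + s⁻¹) = s ^ (n + 1) - s⁻¹ ^ (n + 1) := by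
  have h := eval_S_add_one_sub_mul_eval_S (inv_ne_zero hs) n
  rw [inv_inv, add_comm s⁻¹] at h
  linear_combination h - eval_S_add_one_sub_mul_eval_S hs n

lemma pow_mul_eval_S (hs : s ≠ 0) (n : ℕ) :
    s ^ n * (S K n).eval (s + s⁻¹) = ∑ i ∈ Finset.range (n + 1), (s ^ 2) ^ i := by
  induction n with
  | zero => simp
  | succ n ih =>
    rw [geom_sum_succ, ← ih, Nat.cast_add_one, sub_eq_iff_eq_add'.1
      (eval_S_add_one_sub_mul_eval_S hs n), mul_add, inv_zpow', zpow_neg, ← Nat.cast_add_one,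
      zpow_natCast, mul_inv_cancel₀ (pow_ne_zero _ hs)]
    ring

lemma exists_eq_add_inv [IsAlgClosed K] (y : K) : ∃ s ≠ 0, y = s + s⁻¹ := by
  have hdeg : (X ^ 2 - C y * X + 1 : K[X]).degree = 2 := by compute_degree!
  obtain ⟨s, hs⟩ := IsAlgClosed.exists_root (X ^ 2 - C y * X + 1 : K[X]) (by simp [hdeg])
  have hroot : s ^ 2 - y * s + 1 = 0 := by simpa using hs
  have hs0 : s ≠ 0 := by rintro rfl; simp at hroot
  refine ⟨s, hs0, ?_⟩
  field_simp
  linear_combination -hroot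

open ZMod

variable {n : ℕ} [NeZero n]

lemma prod_X_sub_C_stdAddChar :
    ∏ j : ZMod n, (X - C (stdAddChar j : ℂ)) = X ^ n - 1 := by
  have himage : Finset.univ.image (stdAddChar : ZMod n → ℂ) = nthRootsFinset n 1 := by
    refine Finset.eq_of_subset_of_card_le (Finset.image_subset_iff.2 fun j _ => ?_) ?_
    · rw [mem_nthRootsFinset (NeZero.pos n), ← AddChar.map_nsmul_eq_pow]
      simp
    · rw [Finset.card_image_of_injective _ injective_stdAddChar, Finset.card_univ, ZMod.card,
        (Complex.isPrimitiveRoot_exp n (NeZero.ne n)).card_nthRootsFinset]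
  rw [X_pow_sub_one_eq_prod (NeZero.pos n) (Complex.isPrimitiveRoot_exp n (NeZero.ne n)), ← himage,
    Finset.prod_image injective_stdAddChar.injOn]

lemma prod_sub_stdAddChar (x : ℂ) :
    ∏ j ∈ Finset.univ.erase (0 : ZMod n), (x - stdAddChar j) = ∑ i ∈ Finset.range n, x ^ i := by
  have h : ∏ j ∈ Finset.univ.erase (0 : ZMod n), (X - C (stdAddChar j : ℂ)) =
      ∑ i ∈ Finset.range n, X ^ i := by
    refine mul_left_cancel₀ (X_sub_C_ne_zero (1 : ℂ)) ?_
    have hsplit := Finset.mul_prod_erase _ (fun j : ZMod n => X - C (stdAddChar j : ℂ))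
      (Finset.mem_univ 0)
    rw [AddChar.map_zero_eq_one, prod_X_sub_C_stdAddChar] at hsplit
    rw [hsplit, map_one, mul_geom_sum]
  simpa [eval_prod, eval_finsetSum] using congrArg (eval x) h

theorem prod_sq_sub_two_sub_stdAddChar (y : ℂ) :
    ∏ j ∈ Finset.univ.erase (0 : ZMod n), (y ^ 2 - 2 - (stdAddChar (-j) + stdAddChar j)) =
      (S ℂ (n - 1)).eval y ^ 2 := by
  obtain ⟨s, hs, rfl⟩ := exists_eq_add_inv y
  have hfactor (j : ZMod n) : (s + s⁻¹) ^ 2 - 2 - (stdAddChar (-j) + stdAddChar j) =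
      s⁻¹ ^ 2 * ((s ^ 2 - stdAddChar j) * (s ^ 2 - stdAddChar (-j))) := by
    have hψ : (stdAddChar j * stdAddChar (-j) : ℂ) = 1 := by
      rw [← AddChar.map_add_eq_mul, add_neg_cancel, AddChar.map_zero_eq_one]
    field_simp
    linear_combination -hψ
  have hneg : ∏ j ∈ Finset.univ.erase (0 : ZMod n), (s ^ 2 - stdAddChar (-j)) =
      ∏ j ∈ Finset.univ.erase (0 : ZMod n), (s ^ 2 - stdAddChar j) :=
    Finset.prod_equiv (Equiv.neg _) (by simp) (by simp)
  obtain ⟨m, rfl⟩ : ∃ m, n = m + 1 := Nat.exists_eq_add_one.2 (NeZero.pos n)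
  rw [Finset.prod_congr rfl fun j _ => hfactor j, Finset.prod_mul_distrib, Finset.prod_mul_distrib,
    hneg, prod_sub_stdAddChar, ← pow_mul_eval_S hs, Finset.prod_const,
    Finset.card_erase_of_mem (Finset.mem_univ _), Finset.card_univ, ZMod.card, Nat.cast_add_one,
    add_sub_cancel_right, add_tsub_cancel_right]
  have hcancel : (s⁻¹ ^ 2) ^ m * (s ^ m) ^ 2 = 1 := by
    rw [pow_right_comm, ← mul_pow, ← mul_pow, inv_mul_cancel₀ hs, one_pow, one_pow]
  linear_combination (S ℂ m).eval (s + s⁻¹) ^ 2 * hcancel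

end Chebyshev

section SpectralParameter

variable {K : Type*} [Field K] {s : Fin 4 → K}

/-- The numbers `(s i + (s i)⁻¹) ^ 2` are the roots, with multiplicity, of
`x ^ 4 - 9 * x ^ 3 + 24 * x ^ 2 - 20 * x - 1`. For `x = 2 + ζ + ζ⁻¹`, the product of this polynomial
with `x - 4` is the determinant of the Laplacian of `GP(n,4)` on the plane where the rotation
`u_i ↦ u_{i+1}, v_i ↦ v_{i+1}` acts by `ζ`. -/
structure IsSpectralParameter (s : Fin 4 → K) : Prop where
  ne_zero : ∀ i, s i ≠ 0
  prod_sub : ∀ x, ∏ i, (x - (s i + (s i)⁻¹) ^ 2) = x ^ 4 - 9 * x ^ 3 + 24 * x ^ 2 - 20 * x - 1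

variable (K) in
lemma exists_isSpectralParameter [IsAlgClosed K] : ∃ s : Fin 4 → K, IsSpectralParameter s := by
  let q : K[X] := X ^ 4 - C 9 * X ^ 3 + C 24 * X ^ 2 - C 20 * X - 1
  have hdeg : q.natDegree = 4 := by unfold q; compute_degree!
  have hmonic : q.Monic := by unfold q; monicity!
  have hroots : q.roots.toList.length = 4 := by
    rw [Multiset.length_toList, ← (IsAlgClosed.splits q).natDegree_eq_card_roots, hdeg]
  have hprod : (q.roots.toList.map fun u => X - C u).prod = q := by
    rw [← Multiset.prod_coe, ← Multiset.map_coe, Multiset.coe_toList]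
    exact ((IsAlgClosed.splits q).eq_prod_roots_of_monic hmonic).symm
  obtain ⟨u₀, u₁, u₂, u₃, hu⟩ := List.length_eq_four.1 hroots
  choose sqrt hsqrt using fun u : K => IsAlgClosed.exists_pow_nat_eq u two_pos
  choose param hparam_ne hparam using exists_eq_add_inv (K := K)
  refine ⟨fun i => param (sqrt (![u₀, u₁, u₂, u₃] i)), fun i => hparam_ne _, fun x => ?_⟩
  have hx := congrArg (eval x) hprod
  simp only [← hparam, hsqrt, Fin.prod_univ_four]
  simpa [hu, q, mul_assoc] using hx

lemma piecewise_inv_add_inv (t : Finset (Fin 4)) (i : Fin 4) :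
    t.piecewise s⁻¹ s i + (t.piecewise s⁻¹ s i)⁻¹ = s i + (s i)⁻¹ := by
  by_cases hi : i ∈ t <;> simp [hi, add_comm]

namespace IsSpectralParameter

lemma prod_sq (hs : IsSpectralParameter s) : (∏ i, (s i + (s i)⁻¹)) ^ 2 = -1 := by
  simpa [Fin.prod_univ_four, mul_pow] using hs.prod_sub 0

lemma prod_ne_zero (hs : IsSpectralParameter s) : ∏ i, (s i + (s i)⁻¹) ≠ 0 := by
  intro h
  simpa [h] using hs.prod_sq

lemma prod_sub_inv_sq (hs : IsSpectralParameter s) : (∏ i, (s i - (s i)⁻¹)) ^ 2 = -17 := by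
  have hsq (i : Fin 4) : (s i - (s i)⁻¹) ^ 2 = -1 * (4 - (s i + (s i)⁻¹) ^ 2) := by
    linear_combination -4 * mul_inv_cancel₀ (hs.ne_zero i)
  rw [← Finset.prod_pow, Finset.prod_congr rfl fun i _ => hsq i, Finset.prod_mul_distrib,
    hs.prod_sub]
  norm_num

lemma piecewise_inv (hs : IsSpectralParameter s) (t : Finset (Fin 4)) :
    IsSpectralParameter (t.piecewise s⁻¹ s) where
  ne_zero i := t.piecewise_cases s⁻¹ s (· ≠ 0) (inv_ne_zero (hs.ne_zero i)) (hs.ne_zero i)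
  prod_sub := by simpa only [piecewise_inv_add_inv] using hs.prod_sub

end IsSpectralParameter

/-- The sequence of the theorem in closed form: `a(m) = chebyshevProduct s (m - 8)`. -/
noncomputable def chebyshevProduct (s : Fin 4 → K) (m : ℤ) : K :=
  (-∏ i, (s i + (s i)⁻¹)) ^ m * ∏ i, (Chebyshev.S K m).eval (s i + (s i)⁻¹)

end SpectralParameter

section GeneralizedPetersenFour

open ZMod

variable {n : ℕ} {s : Fin 4 → ℂ}

theorem numSpanningTrees_genPetersen_four (hs : IsSpectralParameter s) (hn : 8 < n) :
    (numSpanningTrees (genPetersen n 4) : ℂ) = n * chebyshevProduct s (n - 1) ^ 2 := by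
  have : NeZero n := ⟨by lia⟩
  have hfactor (j : ZMod n) : (3 - (stdAddChar (-j) + stdAddChar j)) *
      (3 - (stdAddChar (-(((4 : ℕ) : ZMod n) * j)) + stdAddChar (((4 : ℕ) : ZMod n) * j))) - 1 =
      -1 * ((2 ^ 2 - 2 - (stdAddChar (-j) + stdAddChar j)) *
        ∏ i, ((s i + (s i)⁻¹) ^ 2 - 2 - (stdAddChar (-j) + stdAddChar j)) : ℂ) := by
    have hψ : (stdAddChar (-j) * stdAddChar j : ℂ) = 1 := by
      rw [← AddChar.map_add_eq_mul, neg_add_cancel, AddChar.map_zero_eq_one]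
    have hquartic : ∏ i, ((s i + (s i)⁻¹) ^ 2 - 2 - (stdAddChar (-j) + stdAddChar j) : ℂ) =
        ∏ i, (2 + (stdAddChar (-j) + stdAddChar j) - (s i + (s i)⁻¹) ^ 2) := by
      simp only [Fin.prod_univ_four]; ring
    rw [hquartic, hs.prod_sub, ← mul_neg, ← nsmul_eq_mul, ← nsmul_eq_mul,
      AddChar.map_nsmul_eq_pow, AddChar.map_nsmul_eq_pow]
    generalize (stdAddChar (-j) : ℂ) = φ at hψ ⊢
    generalize (stdAddChar j : ℂ) = ψ at hψ ⊢
    grind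
  have hsign : ((-∏ i, (s i + (s i)⁻¹)) ^ (n - 1 : ℤ)) ^ 2 = (-1 : ℂ) ^ (n - 1) := by
    rw [← Nat.cast_pred (by lia), zpow_natCast, pow_right_comm, neg_sq, hs.prod_sq]
  have hmul := mul_numSpanningTrees_genPetersen (n := n) (k := 4) (by lia) (by lia)
  rw [Finset.prod_congr rfl fun j _ => hfactor j, Finset.prod_mul_distrib,
    Finset.prod_mul_distrib, Finset.prod_comm, prod_sq_sub_two_sub_stdAddChar,
    Finset.prod_congr rfl fun i _ => prod_sq_sub_two_sub_stdAddChar _, Chebyshev.S_eval_two,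
    Finset.prod_const, Finset.card_erase_of_mem (Finset.mem_univ _), Finset.card_univ, ZMod.card,
    Finset.prod_pow] at hmul
  push_cast at hmul
  refine mul_left_cancel₀ (NeZero.ne (n : ℂ)) ?_
  rw [hmul, chebyshevProduct, mul_pow, hsign]
  ring

end GeneralizedPetersenFour

section CharacteristicRoot

lemma vieta_four {K : Type*} [Field K] [CharZero K] {u : Fin 4 → K} {b c d e : K}
    (h : ∀ x, ∏ i, (x - u i) = x ^ 4 - b * x ^ 3 + c * x ^ 2 - d * x - e) :
    u 0 + u 1 + u 2 + u 3 = b ∧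
      u 0 * u 1 + u 2 * u 3 + (u 0 + u 1) * (u 2 + u 3) = c ∧
      u 0 * u 1 * (u 2 + u 3) + u 2 * u 3 * (u 0 + u 1) = d ∧
      u 0 * u 1 * u 2 * u 3 = -e := by
  simp only [Fin.prod_univ_four] at h
  refine ⟨?_, ?_, ?_, ?_⟩
  · linear_combination h 1 / 2 + h (-1) / 6 - h 0 / 2 - h 2 / 6
  · linear_combination h 1 / 2 + h (-1) / 2 - h 0
  · linear_combination h 0 / 2 - h 1 + h (-1) / 3 + h 2 / 6
  · linear_combination h 0

/-- One of the trace identities of Fricke and Klein, for commuting elements of `SL₂` with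
eigenvalues `s, s⁻¹` and `t, t⁻¹`. -/
lemma sq_mul_add_mul_inv {K : Type*} [Field K] {s t : K} (hs : s ≠ 0) (ht : t ≠ 0) :
    (s * t + (s * t)⁻¹) ^ 2 = (s + s⁻¹) * (t + t⁻¹) * (s * t + (s * t)⁻¹) -
      ((s + s⁻¹) ^ 2 + (t + t⁻¹) ^ 2 - 4) := by
  field_simp
  ring

variable {K : Type*} [CommRing K] {a b d m n A B X α β k : K}

-- Eliminating `A` gives a second quadratic equation for `B`, hence a linear one.
lemma quadratic_resultant_eq_zero (hab : a * b = -1) (hA : A ^ 2 = a * (A - m))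
    (hB : B ^ 2 = b * (B - n)) (hN : X + A + B = d * A * B) (hk : k = b + d - m * d ^ 2)
    (hα : α = X ^ 2 + a * X + m * a - n * k)
    (hβ : β = 2 * X - d * a * X + a - 2 * m * d * a + k) :
    α ^ 2 + α * β * b + n * β ^ 2 * b = 0 := by
  have hB_quadratic : (X + B) ^ 2 - a * (d * B - 1) * (X + B) + a * m * (d * B - 1) ^ 2 = 0 := by
    linear_combination (X + B + A * (d * B - 1) - a * (d * B - 1)) * hN + (d * B - 1) ^ 2 * hA
  have hB_linear : α + β * B = 0 := by
    rw [hα, hβ, hk]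
    linear_combination hB_quadratic - (1 - a * d + a * m * d ^ 2) * hB +
      (B - n) * (d - m * d ^ 2) * hab
  linear_combination (α - β * B + b * β) * hB_linear + β ^ 2 * hB

-- For `d = x - x⁻¹`, the octic is `x⁻⁸` times the characteristic polynomial of the recurrence.
lemma octic_eq_zero (hab : a * b = -1) (hmn : m + n = 1) (he₂ : a + b + m * n = 4)
    (he₃ : a * n + b * m = 4 + 4 * m * n) (hA : A ^ 2 = a * (A - m)) (hB : B ^ 2 = b * (B - n))
    (hN : -d ^ 2 - 5 + A + B = d * A * B) :
    d ^ 8 - d ^ 7 + 8 * d ^ 6 - 9 * d ^ 5 + 4 * d ^ 4 - 14 * d ^ 3 - 50 * d ^ 2 + 29 * d + 16 =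
      0 := by
  rw [← quadratic_resultant_eq_zero hab hA hB hN rfl rfl rfl]
  obtain rfl : n = 1 - m := by linear_combination hmn
  obtain rfl : b = 4 - m * (1 - m) - a := by linear_combination he₂
  clear hmn he₂ hA hB hN
  grind

end CharacteristicRoot

section Recurrence

variable {K : Type*} [Field K] {s : Fin 4 → K}

/-- The characteristic root attached to `s`; the other roots come from inverting some of the
`s i`. -/
def characteristicRoot (s : Fin 4 → K) : K :=
  -(∏ i, (s i + (s i)⁻¹)) * ∏ i, s i

lemma IsSpectralParameter.characteristicRoot_ne_zero (hs : IsSpectralParameter s) :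
    characteristicRoot s ≠ 0 :=
  mul_ne_zero (neg_ne_zero.2 hs.prod_ne_zero) (Finset.prod_ne_zero_iff.2 fun i _ => hs.ne_zero i)

lemma mul_chebyshevProduct (hs : ∀ i, s i ≠ 0) (hP : ∏ i, (s i + (s i)⁻¹) ≠ 0) (m : ℤ) :
    (∏ i, (s i - (s i)⁻¹)) * -(∏ i, (s i + (s i)⁻¹)) * chebyshevProduct s m =
      ∑ t : Finset (Fin 4), (-1) ^ t.card * characteristicRoot (t.piecewise s⁻¹ s) ^ (m + 1) := by
  calc _ = (-∏ i, (s i + (s i)⁻¹)) ^ (m + 1) * ∏ i, (s i ^ (m + 1) - (s i)⁻¹ ^ (m + 1)) := by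
        simp only [← fun i => sub_inv_mul_eval_S (hs i) m, Finset.prod_mul_distrib,
          chebyshevProduct, zpow_add_one₀ (neg_ne_zero.2 hP)]
        ring
    _ = _ := by
        rw [Finset.prod_sub, Finset.powerset_univ, Finset.mul_sum]
        refine Finset.sum_congr rfl fun t _ => ?_
        simp only [characteristicRoot, piecewise_inv_add_inv, Finset.prod_piecewise,
          Finset.univ_inter, mul_zpow, Pi.inv_apply, Finset.prod_zpow]
        ring

variable [CharZero K]

lemma IsSpectralParameter.octic_characteristicRoot_sub_inv (hs : IsSpectralParameter s) {d : K}
    (hd : d = characteristicRoot s - (characteristicRoot s)⁻¹) :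
    d ^ 8 - d ^ 7 + 8 * d ^ 6 - 9 * d ^ 5 + 4 * d ^ 4 - 14 * d ^ 3 - 50 * d ^ 2 + 29 * d + 16 =
      0 := by
  obtain ⟨he₁, he₂, he₃, he₄⟩ := vieta_four hs.prod_sub
  have hA := sq_mul_add_mul_inv (hs.ne_zero 0) (hs.ne_zero 1)
  have hB := sq_mul_add_mul_inv (hs.ne_zero 2) (hs.ne_zero 3)
  have hT := sq_mul_add_mul_inv (mul_ne_zero (hs.ne_zero 0) (hs.ne_zero 1))
    (mul_ne_zero (hs.ne_zero 2) (hs.ne_zero 3))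
  have hd' : d = -(∏ i, (s i + (s i)⁻¹)) *
      (s 0 * s 1 * (s 2 * s 3) + (s 0 * s 1 * (s 2 * s 3))⁻¹) := by
    have hinv : (∏ i, (s i + (s i)⁻¹))⁻¹ = -∏ i, (s i + (s i)⁻¹) :=
      inv_eq_of_mul_eq_one_right (by linear_combination -hs.prod_sq)
    rw [hd, characteristicRoot, mul_inv, inv_neg, hinv, Fin.prod_univ_four s, mul_assoc (s 0 * s 1)]
    ring
  rw [Fin.prod_univ_four] at hd'
  generalize s 0 + (s 0)⁻¹ = y₀, s 1 + (s 1)⁻¹ = y₁, s 2 + (s 2)⁻¹ = y₂,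
    s 3 + (s 3)⁻¹ = y₃ at *
  generalize s 0 * s 1 + (s 0 * s 1)⁻¹ = A, s 2 * s 3 + (s 2 * s 3)⁻¹ = B,
    s 0 * s 1 * (s 2 * s 3) + (s 0 * s 1 * (s 2 * s 3))⁻¹ = T at *
  refine octic_eq_zero (a := (y₀ * y₁) ^ 2) (b := (y₂ * y₃) ^ 2) (m := y₀ ^ 2 + y₁ ^ 2 - 4)
    (n := y₂ ^ 2 + y₃ ^ 2 - 4) (A := y₀ * y₁ * A) (B := y₂ * y₃ * B) ?_ ?_ ?_ ?_ ?_ ?_ ?_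
  · linear_combination he₄
  · linear_combination he₁
  · linear_combination he₂ - 4 * he₁
  · linear_combination he₃ - 4 * he₂ + 16 * he₁
  · linear_combination (y₀ * y₁) ^ 2 * hA
  · linear_combination (y₂ * y₃) ^ 2 * hB
  · rw [hd']
    linear_combination hT - hA - hB + he₁ + (A * B * T - T ^ 2) * he₄

/-- The linear recurrence of the theorem. -/
def genPetersenFourRecurrence (K : Type*) [CommRing K] : LinearRecurrence K where
  order := 16
  coeffs := ![-1, -1, 0, -2, 16, 10, 2, 16, -50, -16, 2, -10, 16, 2, 0, 1]

lemma isSolution_genPetersenFourRecurrence_iff {R : Type*} [CommRing R] {u : ℕ → R} :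
    (genPetersenFourRecurrence R).IsSolution u ↔ ∀ n,
      u (n + 16) - u (n + 15) - 2 * u (n + 13) - 16 * u (n + 12) + 10 * u (n + 11)
        - 2 * u (n + 10) + 16 * u (n + 9) + 50 * u (n + 8) - 16 * u (n + 7)
        - 2 * u (n + 6) - 10 * u (n + 5) - 16 * u (n + 4) + 2 * u (n + 3)
        + u (n + 1) + u n = 0 := by
  refine forall_congr' fun n => ?_
  rw [← sub_eq_zero]
  change u (n + 16) - ∑ i : Fin 16, (_ : R) * u (n + i) = 0 ↔ _
  refine Eq.congr_left ?_
  simp only [genPetersenFourRecurrence, Fin.sum_univ_succ, Matrix.cons_val_zero,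
    Fin.coe_ofNat_eq_mod, Nat.zero_mod, Matrix.cons_val_succ, Fin.val_succ, zero_add, add_zero,
    Nat.reduceAdd, Finset.univ_unique, Fin.default_eq_zero, Matrix.cons_val_fin_one,
    Fin.val_eq_zero, Finset.sum_const, Finset.card_singleton, one_smul]
  ring

lemma IsSpectralParameter.isSolution_pow_characteristicRoot (hs : IsSpectralParameter s) :
    (genPetersenFourRecurrence K).IsSolution fun n => characteristicRoot s ^ n := by
  have hx := hs.characteristicRoot_ne_zero
  have hoctic := hs.octic_characteristicRoot_sub_inv rfl
  generalize characteristicRoot s = x at hx hoctic ⊢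
  field_simp at hoctic
  rw [isSolution_genPetersenFourRecurrence_iff]
  intro n
  linear_combination x ^ n * hoctic

lemma IsSpectralParameter.isSolution_chebyshevProduct (hs : IsSpectralParameter s) :
    (genPetersenFourRecurrence K).IsSolution fun n => chebyshevProduct s (n - 8) := by
  have hD : (∏ i, (s i - (s i)⁻¹)) * -(∏ i, (s i + (s i)⁻¹)) ≠ 0 := by
    refine mul_ne_zero (fun h => ?_) (neg_ne_zero.2 hs.prod_ne_zero)
    simpa [h] using hs.prod_sub_inv_sq
  have hgeometric : (fun n : ℕ => chebyshevProduct s (n - 8)) =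
      ((∏ i, (s i - (s i)⁻¹)) * -(∏ i, (s i + (s i)⁻¹)))⁻¹ • ∑ t : Finset (Fin 4),
        ((-1) ^ t.card * characteristicRoot (t.piecewise s⁻¹ s) ^ (-7 : ℤ)) •
          fun n : ℕ => characteristicRoot (t.piecewise s⁻¹ s) ^ n := by
    ext n
    rw [Pi.smul_apply, smul_eq_mul, eq_inv_mul_iff_mul_eq₀ hD,
      mul_chebyshevProduct hs.ne_zero hs.prod_ne_zero, Finset.sum_apply]
    refine Finset.sum_congr rfl fun t _ => ?_
    rw [Pi.smul_apply, smul_eq_mul, mul_assoc, ← zpow_natCast (characteristicRoot _),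
      ← zpow_add₀ (hs.piecewise_inv t).characteristicRoot_ne_zero]
    ring_nf
  rw [hgeometric, LinearRecurrence.is_sol_iff_mem_solSpace]
  refine Submodule.smul_mem _ _ (Submodule.sum_mem _ fun t _ => Submodule.smul_mem _ _ ?_)
  exact (LinearRecurrence.is_sol_iff_mem_solSpace _ _).1
    (hs.piecewise_inv t).isSolution_pow_characteristicRoot

end Recurrence

section InitialValues

variable {K : Type*} [Field K] {s : Fin 4 → K}

lemma chebyshevProduct_neg_sub_two (hP : (∏ i, (s i + (s i)⁻¹)) ^ 2 = -1) (m : ℤ) :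
    chebyshevProduct s (-m - 2) = (-1) ^ (m + 1) * chebyshevProduct s m := by
  have hsq : (-∏ i, (s i + (s i)⁻¹)) ^ (2 : ℤ) = -1 := by rw [zpow_ofNat, neg_sq, hP]
  have hne : -∏ i, (s i + (s i)⁻¹) ≠ 0 := by
    intro h
    simp [h] at hsq
  have hsign : (-∏ i, (s i + (s i)⁻¹)) ^ (-m - 2) =
      (-1) ^ (m + 1) * (-∏ i, (s i + (s i)⁻¹)) ^ m := by
    rw [show -m - 2 = 2 * -(m + 1) + m by ring, zpow_add₀ hne, zpow_mul, hsq, zpow_neg,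
      ← inv_zpow, inv_neg_one]
  rw [chebyshevProduct, hsign, chebyshevProduct, Chebyshev.S_neg_sub_two]
  simp only [eval_neg, Finset.prod_neg, Finset.card_univ, Fintype.card_fin]
  ring

namespace IsSpectralParameter

lemma prod_sq_sub (hs : IsSpectralParameter s) (x : K) :
    ∏ i, ((s i + (s i)⁻¹) ^ 2 - x) = x ^ 4 - 9 * x ^ 3 + 24 * x ^ 2 - 20 * x - 1 := by
  rw [← hs.prod_sub x, Fin.prod_univ_four, Fin.prod_univ_four]
  ring

lemma prod_eval_S_two (hs : IsSpectralParameter s) :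
    ∏ i, (Chebyshev.S K 2).eval (s i + (s i)⁻¹) = -5 := by
  simp only [Chebyshev.S_two, eval_sub, eval_pow, eval_X, eval_one, hs.prod_sq_sub]
  norm_num

lemma prod_eval_S_three (hs : IsSpectralParameter s) :
    ∏ i, (Chebyshev.S K 3).eval (s i + (s i)⁻¹) = -∏ i, (s i + (s i)⁻¹) := by
  simp only [chebyshevS_three, eval_mul, eval_sub, eval_pow, eval_X, eval_ofNat,
    Finset.prod_mul_distrib, hs.prod_sq_sub]
  ring

lemma prod_eval_S_five (hs : IsSpectralParameter s) :
    ∏ i, (Chebyshev.S K 5).eval (s i + (s i)⁻¹) = 35 * ∏ i, (s i + (s i)⁻¹) := by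
  simp only [chebyshevS_five, eval_mul, eval_sub, eval_pow, eval_X, eval_ofNat, eval_one,
    Finset.prod_mul_distrib, hs.prod_sq_sub]
  ring

lemma quartic_eq_zero (hs : IsSpectralParameter s) (i : Fin 4) :
    ((s i + (s i)⁻¹) ^ 2) ^ 4 - 9 * ((s i + (s i)⁻¹) ^ 2) ^ 3 + 24 * ((s i + (s i)⁻¹) ^ 2) ^ 2 -
      20 * (s i + (s i)⁻¹) ^ 2 - 1 = 0 := by
  rw [← hs.prod_sub]
  exact Finset.prod_eq_zero (Finset.mem_univ i) (sub_self _)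

variable [CharZero K]

lemma prod_quadratic (hs : IsSpectralParameter s) (b c : K) :
    ∏ i, (((s i + (s i)⁻¹) ^ 2) ^ 2 + b * (s i + (s i)⁻¹) ^ 2 + c) =
      c ^ 4 + (9 * b + 33) * c ^ 3 + (24 * b ^ 2 + 156 * b + 214) * c ^ 2 +
        (20 * b ^ 3 + 184 * b ^ 2 + 507 * b + 448) * c -
        (b ^ 4 + 9 * b ^ 3 + 24 * b ^ 2 + 20 * b - 1) := by
  obtain ⟨he₁, he₂, he₃, he₄⟩ := vieta_four hs.prod_sub
  rw [Fin.prod_univ_four]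
  generalize (s 0 + (s 0)⁻¹) ^ 2 = u₀, (s 1 + (s 1)⁻¹) ^ 2 = u₁, (s 2 + (s 2)⁻¹) ^ 2 = u₂,
    (s 3 + (s 3)⁻¹) ^ 2 = u₃ at *
  grind

lemma prod_eval_S_four (hs : IsSpectralParameter s) :
    ∏ i, (Chebyshev.S K 4).eval (s i + (s i)⁻¹) = 19 := by
  have hS (y : K) : (Chebyshev.S K 4).eval y = (y ^ 2) ^ 2 + -3 * y ^ 2 + 1 := by
    simp only [chebyshevS_four, eval_mul, eval_sub, eval_add, eval_pow, eval_X, eval_ofNat,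
      eval_one]
    ring
  simp only [hS, hs.prod_quadratic]
  norm_num

lemma prod_eval_S_six (hs : IsSpectralParameter s) :
    ∏ i, (Chebyshev.S K 6).eval (s i + (s i)⁻¹) = -83 := by
  -- Modulo the quartic satisfied by `u = y ^ 2`, `(u - 4) * S₆(y)` is quadratic in `u`.
  have hreduce (i : Fin 4) : (Chebyshev.S K 6).eval (s i + (s i)⁻¹) * ((s i + (s i)⁻¹) ^ 2 - 4) =
      2 * (((s i + (s i)⁻¹) ^ 2) ^ 2 + (-5 / 2) * (s i + (s i)⁻¹) ^ 2 + 5 / 2) := by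
    simp only [chebyshevS_six, eval_sub, eval_add, eval_mul, eval_pow, eval_X, eval_ofNat, eval_one]
    linear_combination hs.quartic_eq_zero i
  have hprod := Fintype.prod_congr _ _ hreduce
  rw [Finset.prod_mul_distrib, Finset.prod_mul_distrib, hs.prod_sq_sub, hs.prod_quadratic,
    Finset.prod_const, Finset.card_univ, Fintype.card_fin] at hprod
  linear_combination -hprod / 17

lemma prod_eval_S_seven (hs : IsSpectralParameter s) :
    ∏ i, (Chebyshev.S K 7).eval (s i + (s i)⁻¹) = -73 * ∏ i, (s i + (s i)⁻¹) := by
  have hS (y : K) : (Chebyshev.S K 7).eval y =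
      y * ((y ^ 2 - 2) * ((y ^ 2) ^ 2 + -4 * y ^ 2 + 2)) := by
    simp only [chebyshevS_seven, eval_mul, eval_sub, eval_add, eval_pow, eval_X, eval_ofNat]
    ring
  simp only [hS, Finset.prod_mul_distrib, hs.prod_sq_sub, hs.prod_quadratic]
  ring

lemma chebyshevProduct_natCast (hs : IsSpectralParameter s) (m : Fin 8) :
    chebyshevProduct s (m : ℕ) = ![1, 1, 5, 1, 19, 35, 83, 73] m := by
  have hP := hs.prod_sq
  fin_cases m <;>
    simp only [chebyshevProduct, Fin.reduceFinMk, Nat.cast_zero, Nat.cast_one,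
      Nat.cast_ofNat, Chebyshev.S_zero, Chebyshev.S_one, eval_one, eval_X, hs.prod_eval_S_two,
      hs.prod_eval_S_three, hs.prod_eval_S_four, hs.prod_eval_S_five, hs.prod_eval_S_six,
      hs.prod_eval_S_seven, zpow_ofNat, Finset.prod_const_one,
      Matrix.cons_val] <;>
    generalize ∏ i, (s i + (s i)⁻¹) = P at hP <;>
    grind

lemma chebyshevProduct_sub_eight (hs : IsSpectralParameter s) (m : Fin 16) :
    chebyshevProduct s ((m : ℕ) - 8) =
      ![-83, 35, -19, 1, -5, 1, -1, 0, 1, 1, 5, 1, 19, 35, 83, 73] m := by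
  have hneg (k : Fin 7) :
      chebyshevProduct s (-(k : ℕ) - 2) = ![-1, 1, -5, 1, -19, 35, -83] k := by
    rw [chebyshevProduct_neg_sub_two hs.prod_sq]
    have h := hs.chebyshevProduct_natCast k.castSucc
    rw [Fin.val_castSucc] at h
    rw [h]
    fin_cases k <;> norm_num
  have hnegone : chebyshevProduct s (-1) = 0 := by simp [chebyshevProduct]
  have hpos := hs.chebyshevProduct_natCast
  simp only [Nat.succ_eq_add_one, Nat.reduceAdd, Fin.forall_fin_succ, Fin.isValue,
    Fin.coe_ofNat_eq_mod, Nat.zero_mod, CharP.cast_eq_zero, Matrix.cons_val_zero, Fin.val_succ,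
    Nat.cast_add, Nat.cast_one, Matrix.cons_val_succ, zero_add, Int.reduceAdd, Fin.val_eq_zero,
    Matrix.cons_val_fin_one, forall_const, neg_zero, zero_sub, Int.reduceNeg, neg_add_rev,
    add_zero, Int.reduceSub] at hpos hneg
  fin_cases m <;> simp [hpos, hnegone, hneg]

end IsSpectralParameter

end InitialValues

/-- With `a : ℕ → ℤ` the sequence with initial values
`(a(0), …, a(15)) = (−83, 35, −19, 1, −5, 1, −1, 0, 1, 1, 5, 1, 19, 35, 83, 73)`
satisfying the recurrence below, `τ(GP(n,4)) = n·a(n+7)²` for all `n ≥ 9`. -/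
theorem spanning_trees_GP4_recurrence (a : ℕ → ℤ)
    (h0 : a 0 = -83) (h1 : a 1 = 35) (h2 : a 2 = -19) (h3 : a 3 = 1)
    (h4 : a 4 = -5) (h5 : a 5 = 1) (h6 : a 6 = -1) (h7 : a 7 = 0)
    (h8 : a 8 = 1) (h9 : a 9 = 1) (h10 : a 10 = 5) (h11 : a 11 = 1)
    (h12 : a 12 = 19) (h13 : a 13 = 35) (h14 : a 14 = 83) (h15 : a 15 = 73)
    (hrec : ∀ n : ℕ,
      a (n + 16) - a (n + 15) - 2 * a (n + 13) - 16 * a (n + 12) + 10 * a (n + 11)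
        - 2 * a (n + 10) + 16 * a (n + 9) + 50 * a (n + 8) - 16 * a (n + 7)
        - 2 * a (n + 6) - 10 * a (n + 5) - 16 * a (n + 4) + 2 * a (n + 3)
        + a (n + 1) + a n = 0) :
    ∀ n : ℕ, 9 ≤ n →
      (numSpanningTrees (genPetersen n 4) : ℤ) = n * a (n + 7) ^ 2 := by
  intro n hn
  obtain ⟨s, hs⟩ := exists_isSpectralParameter ℂ
  have ha : (fun m => (a m : ℂ)) = fun m : ℕ => chebyshevProduct s (m - 8) := by
    refine (LinearRecurrence.eq_iff_eqOn_range_order _ _ _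
      (isSolution_genPetersenFourRecurrence_iff.2 fun m => by exact_mod_cast hrec m)
      hs.isSolution_chebyshevProduct).2 fun m hm => ?_
    obtain ⟨m, rfl⟩ : ∃ i : Fin 16, ↑i = m := ⟨⟨m, Finset.mem_range.1 hm⟩, rfl⟩
    refine Eq.trans ?_ (hs.chebyshevProduct_sub_eight m).symm
    fin_cases m <;> simp [*]
  have hvalue : (a (n + 7) : ℂ) = chebyshevProduct s (n - 1) := by
    rw [congrFun ha (n + 7)]
    push_cast
    ring_nf
  have h := numSpanningTrees_genPetersen_four hs (by lia : 8 < n)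
  rw [← hvalue] at h
  exact_mod_cast h
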